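/- Let V: ℝ → [0,∞) be an Orlicz function and R ∈ (0,∞). Then lim_{n→∞} (1/n) log vol_n(B_R^{n,V}) = inf_{α < 0} [ log ∫_ℝ e^{αV(t)} dt − αR ], and this infimum equals φ_V(ᾱ,0) − ᾱR, where ᾱ ∈ (-∞,0) is the unique solution of ∫_ℝ V(x) e^{ᾱV(x)} dx = R ∫_ℝ e^{ᾱV(x)} dx. -/

import Mathlib

open MeasureTheory Real Filter Topology ENNReal

noncomputable section

/-- An Orlicz function: convex, symmetric, vanishing only at `0`, nonnegative. -/
def IsOrlicz (V : ℝ → ℝ) : Prop :=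
  ConvexOn ℝ Set.univ V ∧ (∀ x, V (-x) = V x) ∧ V 0 = 0 ∧ (∀ x, x ≠ 0 → 0 < V x) ∧
    (∀ x, 0 ≤ V x)

/-- `φ_V(α,0) = log ∫ e^{α V(x)} dx`. -/
def phiV0 (V : ℝ → ℝ) (α : ℝ) : ℝ := Real.log (∫ x : ℝ, Real.exp (α * V x))

/-- The Orlicz ball `B_R^{n,V} = {x ∈ ℝⁿ : ∑ V(x_k) ≤ R n}`. -/
def OrliczBall (V : ℝ → ℝ) (R : ℝ) (n : ℕ) : Set (Fin n → ℝ) :=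
  {x | ∑ i, V (x i) ≤ R * n}

/-- A finite power of a tilted measure has the product of the densities as its density. -/
theorem pi_tilted {ι E : Type*} [Fintype ι] [MeasurableSpace E] (μ : Measure E) [SigmaFinite μ]
    {f : E → ℝ} (hf : Integrable (fun x => Real.exp (f x)) μ) :
    Measure.pi (fun _ : ι => μ.tilted f) = (Measure.pi fun _ : ι => μ).withDensity
      (fun x => ENNReal.ofReal (∏ i, Real.exp (f (x i)) / ∫ y, Real.exp (f y) ∂μ)) := by
  refine Measure.pi_eq fun s hs => ?_
  rw [withDensity_apply _ (MeasurableSet.univ_pi hs), Measure.restrict_pi_pi,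
    ← ofReal_integral_eq_lintegral_ofReal, integral_fintype_prod_eq_prod
      (f := fun _ y => Real.exp (f y) / ∫ y, Real.exp (f y) ∂μ),
    ENNReal.ofReal_prod_of_nonneg fun i _ => integral_nonneg fun y => by positivity]
  · exact Finset.prod_congr rfl fun i _ => (tilted_apply_eq_ofReal_integral' f (hs i)).symm
  · exact Integrable.fintype_prod (f := fun _ y => Real.exp (f y) / ∫ y, Real.exp (f y) ∂μ)
      fun i => (hf.div_const _).integrableOn
  · exact ae_of_all _ fun x => Finset.prod_nonneg fun i _ => by positivity

namespace IsOrlicz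

variable {V : ℝ → ℝ} {α R : ℝ}

theorem continuous (hV : IsOrlicz V) : Continuous V :=
  continuousOn_univ.1 (hV.1.continuousOn isOpen_univ)

theorem map_mul_le (hV : IsOrlicz V) {c : ℝ} (h0 : 0 ≤ c) (h1 : c ≤ 1) (x : ℝ) :
    V (c * x) ≤ c * V x := by
  have h := hV.1.2 (Set.mem_univ x) (Set.mem_univ 0) h0 (sub_nonneg.2 h1) (by ring)
  simpa [hV.2.2.1] using h

theorem linear_lower_bound (hV : IsOrlicz V) (x : ℝ) : V 1 * (|x| - 1) ≤ V x := by
  obtain ⟨-, hsymm, -, -, hnonneg⟩ := id hV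
  have habs : V |x| = V x := by
    rcases abs_choice x with h | h <;> rw [h]
    exact hsymm x
  rcases le_total |x| 1 with h | h
  · nlinarith [hnonneg 1, hnonneg x]
  · have hx : 0 < |x| := one_pos.trans_le h
    have := hV.map_mul_le (inv_nonneg.2 hx.le) (inv_le_one_of_one_le₀ h) |x|
    rw [inv_mul_cancel₀ hx.ne', habs, ← div_eq_inv_mul, le_div_iff₀ hx] at this
    linarith [hnonneg 1]

theorem integrable_exp_mul (hV : IsOrlicz V) (hα : α < 0) :
    Integrable (fun x => Real.exp (α * V x)) := by
  have hV1 : 0 < V 1 := hV.2.2.2.1 1 one_ne_zero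
  have hcont : Continuous fun x => Real.exp (α * V x) := by
    have := hV.continuous
    fun_prop
  have hle (x : ℝ) : α * V x ≤ -(α * V 1) + α * V 1 * |x| := by
    nlinarith [hV.linear_lower_bound x]
  rw [← integrableOn_univ, ← Set.Iic_union_Ioi (a := (0 : ℝ)), integrableOn_union]
  constructor
  · refine Integrable.mono' ((integrableOn_exp_mul_Iic (a := -(α * V 1)) (by nlinarith) 0).const_mul
      (Real.exp (-(α * V 1)))) hcont.aestronglyMeasurable ?_
    filter_upwards [ae_restrict_mem measurableSet_Iic] with x hx
    rw [Real.norm_of_nonneg (Real.exp_pos _).le, ← Real.exp_add, Real.exp_le_exp]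
    have := hle x
    rw [abs_of_nonpos hx] at this
    linarith
  · refine Integrable.mono' ((integrableOn_exp_mul_Ioi (a := α * V 1) (by nlinarith) 0).const_mul
      (Real.exp (-(α * V 1)))) hcont.aestronglyMeasurable ?_
    filter_upwards [ae_restrict_mem measurableSet_Ioi] with x hx
    rw [Real.norm_of_nonneg (Real.exp_pos _).le, ← Real.exp_add, Real.exp_le_exp]
    have := hle x
    rw [abs_of_pos hx] at this
    linarith

theorem memLp_two_tilted (hV : IsOrlicz V) (hα : α < 0) :
    MemLp V 2 (volume.tilted fun x => α * V x) := by
  refine ProbabilityTheory.memLp_tilted_mul (interior_maximal ?_ isOpen_Iio hα) 2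
  exact fun t ht => hV.integrable_exp_mul ht

theorem isProbabilityMeasure_tilted (hV : IsOrlicz V) (hα : α < 0) :
    IsProbabilityMeasure (volume.tilted fun x => α * V x) :=
  MeasureTheory.isProbabilityMeasure_tilted (hV.integrable_exp_mul hα)

theorem pi_tilted_apply (hV : IsOrlicz V) (hα : α < 0) {n : ℕ} {s : Set (Fin n → ℝ)}
    (hs : MeasurableSet s) :
    Measure.pi (fun _ : Fin n => volume.tilted fun x => α * V x) s =
      ∫⁻ x in s, ENNReal.ofReal (Real.exp (α * ∑ i, V (x i) - n * phiV0 V α)) := by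
  rw [pi_tilted _ (hV.integrable_exp_mul hα), withDensity_apply _ hs]
  refine lintegral_congr fun x => ?_
  rw [Finset.prod_div_distrib, ← Real.exp_sum, Finset.prod_const, Finset.card_univ,
    Fintype.card_fin, Real.exp_sub, ← Finset.mul_sum, Real.exp_nat_mul, phiV0,
    Real.exp_log (integral_exp_pos (hV.integrable_exp_mul hα))]

theorem measurableSet_orliczBall (hV : IsOrlicz V) (n : ℕ) : MeasurableSet (OrliczBall V R n) := by
  have := hV.continuous
  exact measurableSet_le (by fun_prop) measurable_const

theorem measurableSet_energy_between (hV : IsOrlicz V) (n : ℕ) (a b : ℝ) :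
    MeasurableSet {x : Fin n → ℝ | a ≤ ∑ i, V (x i) ∧ ∑ i, V (x i) ≤ b} := by
  have := hV.continuous
  have hm : Measurable fun x : Fin n → ℝ => ∑ i, V (x i) := by fun_prop
  exact hm measurableSet_Icc

theorem volume_orliczBall_le (hV : IsOrlicz V) (hα : α < 0) (n : ℕ) :
    volume (OrliczBall V R n) ≤ ENNReal.ofReal (Real.exp (n * (phiV0 V α - α * R))) := by
  have := hV.isProbabilityMeasure_tilted hα
  have h : ENNReal.ofReal (Real.exp (-(n * (phiV0 V α - α * R)))) * volume (OrliczBall V R n) ≤ 1 := by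
    rw [← setLIntegral_const]
    refine le_trans ?_ (prob_le_one (μ := Measure.pi fun _ : Fin n => volume.tilted fun x => α * V x)
      (s := OrliczBall V R n))
    rw [hV.pi_tilted_apply hα (hV.measurableSet_orliczBall n)]
    refine setLIntegral_mono' (hV.measurableSet_orliczBall n) fun x hx => ?_
    have hx : ∑ i, V (x i) ≤ R * n := hx
    gcongr
    nlinarith
  rw [Real.exp_neg, ENNReal.ofReal_inv_of_pos (Real.exp_pos _)] at h
  simpa using (ENNReal.inv_mul_le_iff (by simp [Real.exp_pos]) ENNReal.ofReal_ne_top).1 h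

/-- The mass which the tilted product measure gives to the points of large energy in an Orlicz ball
is controlled by the volume of the ball. -/
theorem pi_tilted_le_volume (hV : IsOrlicz V) (hα : α < 0) (n : ℕ) (R' : ℝ) :
    Measure.pi (fun _ : Fin n => volume.tilted fun x => α * V x)
      {x | R' * n ≤ ∑ i, V (x i) ∧ ∑ i, V (x i) ≤ R * n} ≤
      ENNReal.ofReal (Real.exp (-(n * (phiV0 V α - α * R')))) * volume (OrliczBall V R n) := by
  have hs : MeasurableSet {x : Fin n → ℝ | R' * n ≤ ∑ i, V (x i) ∧ ∑ i, V (x i) ≤ R * n} :=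
    hV.measurableSet_energy_between n _ _
  rw [hV.pi_tilted_apply hα hs]
  calc _ ≤ ∫⁻ x in {x : Fin n → ℝ | R' * n ≤ ∑ i, V (x i) ∧ ∑ i, V (x i) ≤ R * n},
        ENNReal.ofReal (Real.exp (-(n * (phiV0 V α - α * R')))) := by
        refine setLIntegral_mono' hs fun x hx => ?_
        have := hx.1
        gcongr
        nlinarith
    _ ≤ _ := by
        rw [setLIntegral_const]
        gcongr
        exact fun x hx => hx.2

theorem volume_orliczBall_scale (hV : IsOrlicz V) {c : ℝ} (h0 : 0 < c) (h1 : c ≤ 1) (n : ℕ) :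
    ENNReal.ofReal (c ^ n) * volume (OrliczBall V (R / c) n) ≤ volume (OrliczBall V R n) := by
  have h := Measure.addHaar_smul (volume : Measure (Fin n → ℝ)) c (OrliczBall V (R / c) n)
  rw [Module.finrank_fin_fun, abs_of_pos (pow_pos h0 n)] at h
  rw [← h]
  refine measure_mono ?_
  rintro _ ⟨x, hx, rfl⟩
  have hx : ∑ i, V (x i) ≤ R / c * n := hx
  change ∑ i, V (c * x i) ≤ R * n
  calc _ ≤ ∑ i, c * V (x i) := Finset.sum_le_sum fun i _ => hV.map_mul_le h0.le h1 _
    _ = c * ∑ i, V (x i) := by rw [Finset.mul_sum]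
    _ ≤ c * (R / c * n) := by gcongr
    _ = R * n := by field_simp

theorem integral_tilted_eq (hV : IsOrlicz V) (hα : α < 0)
    (h : ∫ x, V x * Real.exp (α * V x) = R * ∫ x, Real.exp (α * V x)) :
    ∫ x, V x ∂(volume.tilted fun x => α * V x) = R := by
  have hZ := integral_exp_pos (hV.integrable_exp_mul hα)
  rw [integral_tilted]
  simp_rw [smul_eq_mul, div_mul_eq_mul_div, mul_comm (Real.exp _)]
  rw [integral_div, h, mul_div_cancel_right₀ _ hZ.ne']

/-- Under the tilted product measure, the empirical mean of `V` concentrates at its expectation. -/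
theorem eventually_half_le_pi_tilted (hV : IsOrlicz V) (hα : α < 0)
    (h : ∫ x, V x * Real.exp (α * V x) = R * ∫ x, Real.exp (α * V x)) {ε : ℝ} (hε : 0 < ε) :
    ∀ᶠ n : ℕ in atTop, ENNReal.ofReal 2⁻¹ ≤
      Measure.pi (fun _ : Fin n => volume.tilted fun x => α * V x)
        {x | (R - ε) * n ≤ ∑ i, V (x i) ∧ ∑ i, V (x i) ≤ (R + ε) * n} := by
  have := hV.isProbabilityMeasure_tilted hα
  have hcont := hV.continuous
  set ν := volume.tilted fun x => α * V x with hν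
  have hLp : MemLp V 2 ν := hV.memLp_two_tilted hα
  have hmean : ∫ x, V x ∂ν = R := hV.integral_tilted_eq hα h
  have hlim : Tendsto (fun n : ℕ => ProbabilityTheory.variance V ν / ε ^ 2 / n) atTop (𝓝 0) :=
    tendsto_const_div_atTop_nhds_zero_nat _
  filter_upwards [hlim.eventually_le_const (show (0 : ℝ) < 2⁻¹ by norm_num), eventually_gt_atTop 0]
    with n hn hn0
  have hn0 : (0 : ℝ) < n := by exact_mod_cast hn0
  have hLpi (i : Fin n) : MemLp (fun x : Fin n → ℝ => V (x i)) 2 (Measure.pi fun _ => ν) :=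
    hLp.comp_measurePreserving (measurePreserving_eval (fun _ => ν) i)
  have hcheb := ProbabilityTheory.meas_ge_le_variance_div_sq
    (memLp_finsetSum' Finset.univ fun i _ => hLpi i) (mul_pos hε hn0)
  rw [ProbabilityTheory.variance_sum_pi (X := fun _ => V) fun _ => hLp] at hcheb
  have hmean' : ∫ x, (∑ i, fun x : Fin n → ℝ => V (x i)) x ∂(Measure.pi fun _ => ν) = R * n := by
    simp_rw [Finset.sum_apply]
    rw [integral_finsetSum _ fun i _ => (hLpi i).integrable one_le_two]
    simp_rw [integral_comp_eval (μ := fun _ : Fin n => ν) hcont.aestronglyMeasurable, hmean]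
    simp [mul_comm]
  rw [hmean'] at hcheb
  have hs : MeasurableSet {x : Fin n → ℝ |
      (R - ε) * n ≤ ∑ i, V (x i) ∧ ∑ i, V (x i) ≤ (R + ε) * n} :=
    hV.measurableSet_energy_between n _ _
  have hcompl : Measure.pi (fun _ : Fin n => ν) {x : Fin n → ℝ |
      (R - ε) * n ≤ ∑ i, V (x i) ∧ ∑ i, V (x i) ≤ (R + ε) * n}ᶜ ≤ ENNReal.ofReal 2⁻¹ := by
    refine (measure_mono fun x hx => ?_).trans (hcheb.trans (ENNReal.ofReal_le_ofReal ?_))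
    · by_contra hlt
      simp only [Set.mem_ofPred_eq, not_le, Finset.sum_apply, abs_lt] at hlt
      exact hx ⟨by linarith [hlt.1], by linarith [hlt.2]⟩
    · refine le_trans (le_of_eq ?_) hn
      simp only [Finset.sum_const, Finset.card_univ, Fintype.card_fin, nsmul_eq_mul]
      field_simp
  have hadd := prob_add_prob_compl (μ := Measure.pi fun _ : Fin n => ν) hs
  by_contra! hlt
  have : (1 : ℝ≥0∞) < ENNReal.ofReal 2⁻¹ + ENNReal.ofReal 2⁻¹ := by
    rw [← hadd]
    exact ENNReal.add_lt_add_of_lt_of_le (ne_top_of_le_ne_top ENNReal.ofReal_ne_top hcompl) hlt hcompl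
  rw [← ENNReal.ofReal_add (by norm_num) (by norm_num)] at this
  norm_num at this

theorem eventually_le_volume_orliczBall (hV : IsOrlicz V) (hα : α < 0) (hR : 0 < R)
    (h : ∫ x, V x * Real.exp (α * V x) = R * ∫ x, Real.exp (α * V x)) {c : ℝ} (h0 : 0 < c)
    (h1 : c < 1) :
    ∀ᶠ n : ℕ in atTop, ENNReal.ofReal (2⁻¹ * Real.exp
      (n * (Real.log c + phiV0 V α - α * (R - (R / c - R))))) ≤ volume (OrliczBall V R n) := by
  have hε : 0 < R / c - R := sub_pos.2 ((lt_div_iff₀ h0).2 (by nlinarith))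
  filter_upwards [hV.eventually_half_le_pi_tilted hα h hε] with n hn
  refine le_trans ?_ (hV.volume_orliczBall_scale h0 h1.le n)
  have hle := hn.trans (hV.pi_tilted_le_volume hα n (R - (R / c - R)))
  rw [add_sub_cancel, Real.exp_neg, ENNReal.ofReal_inv_of_pos (Real.exp_pos _), mul_comm,
    ← div_eq_mul_inv, ENNReal.le_div_iff_mul_le (by simp [Real.exp_pos]) (by simp),
    ← ENNReal.ofReal_mul (by norm_num)] at hle
  refine le_trans (le_of_eq ?_) (mul_le_mul_right hle _)
  rw [← ENNReal.ofReal_mul (by positivity), add_sub_assoc, mul_add, Real.exp_add,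
    Real.exp_nat_mul (Real.log c), Real.exp_log h0]
  ring_nf

theorem log_volume_le (hV : IsOrlicz V) (hα : α < 0) {n : ℕ} (hn : 0 < n)
    (hpos : volume (OrliczBall V R n) ≠ 0) :
    1 / (n : ℝ) * Real.log (volume (OrliczBall V R n)).toReal ≤ phiV0 V α - α * R := by
  have hle := hV.volume_orliczBall_le (R := R) hα n
  have hn : (0 : ℝ) < n := by exact_mod_cast hn
  have hlog := Real.log_le_log (ENNReal.toReal_pos hpos (ne_top_of_le_ne_top (by simp) hle))
    (ENNReal.toReal_le_of_le_ofReal (Real.exp_pos _).le hle)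
  rw [Real.log_exp] at hlog
  rwa [one_div, inv_mul_le_iff₀ hn]

theorem tendsto_log_volume (hV : IsOrlicz V) (hα : α < 0) (hR : 0 < R)
    (h : ∫ x, V x * Real.exp (α * V x) = R * ∫ x, Real.exp (α * V x)) :
    Tendsto (fun n : ℕ => 1 / (n : ℝ) * Real.log (volume (OrliczBall V R n)).toReal) atTop
      (𝓝 (phiV0 V α - α * R)) ∧ ∀ᶠ n : ℕ in atTop, volume (OrliczBall V R n) ≠ 0 := by
  have hpos : ∀ᶠ n : ℕ in atTop, volume (OrliczBall V R n) ≠ 0 := by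
    filter_upwards [hV.eventually_le_volume_orliczBall hα hR h (c := 2⁻¹) (by norm_num)
      (by norm_num)] with n hn
    exact ((ENNReal.ofReal_pos.2 (by positivity)).trans_le hn).ne'
  refine ⟨tendsto_order.2 ⟨fun a ha => ?_, fun a ha => ?_⟩, hpos⟩
  · have hcont : ContinuousAt
        (fun c : ℝ => Real.log c + phiV0 V α - α * (R - (R / c - R))) 1 := by
      fun_prop (disch := norm_num)
    have hnear := (hcont.eventually (lt_mem_nhds (a := a) (by simpa using ha))).filter_mono
      (nhdsWithin_le_nhds (s := Set.Iio 1))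
    obtain ⟨c, hac, h0, h1⟩ := (hnear.and (Ioo_mem_nhdsLT (zero_lt_one' ℝ))).exists
    have hlim : Tendsto (fun n : ℕ => Real.log c + phiV0 V α - α * (R - (R / c - R)) -
        Real.log 2 / n) atTop (𝓝 (Real.log c + phiV0 V α - α * (R - (R / c - R)) - 0)) :=
      tendsto_const_nhds.sub (tendsto_const_div_atTop_nhds_zero_nat _)
    rw [sub_zero] at hlim
    filter_upwards [hlim.eventually_const_lt hac, hV.eventually_le_volume_orliczBall hα hR h h0 h1,
      eventually_gt_atTop 0] with n han hn hn0
    have hn0 : (0 : ℝ) < n := by exact_mod_cast hn0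
    refine han.trans_le ?_
    have hfin := ne_top_of_le_ne_top ENNReal.ofReal_ne_top (hV.volume_orliczBall_le (R := R) hα n)
    have hlog := Real.log_le_log (by positivity) ((ENNReal.ofReal_le_iff_le_toReal hfin).1 hn)
    rw [Real.log_mul (by norm_num) (Real.exp_ne_zero _), Real.log_exp, Real.log_inv] at hlog
    rw [one_div, le_inv_mul_iff₀ hn0, mul_sub, mul_div_cancel₀ _ hn0.ne']
    linarith
  · filter_upwards [hpos, eventually_gt_atTop 0] with n hn hn0
    exact (hV.log_volume_le hα hn0 hn).trans_lt ha

end IsOrlicz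

/-- `(1/n) log vol_n(B_R^{n,V}) → inf_{α<0} [log ∫ e^{αV} - αR]`, and the infimum is
attained at (and equals the value at) the unique `ᾱ < 0` solving
`∫ V e^{ᾱV} = R ∫ e^{ᾱV}`. -/
theorem stmt7 (V : ℝ → ℝ) (hV : IsOrlicz V) (R : ℝ) (hR : 0 < R)
    (αb : ℝ) (hαb : αb < 0)
    (hαbeq : (∫ x : ℝ, V x * Real.exp (αb * V x)) = R * ∫ x : ℝ, Real.exp (αb * V x))
    (hαbuniq : ∀ α' : ℝ, α' < 0 →
      (∫ x : ℝ, V x * Real.exp (α' * V x)) = R * ∫ x : ℝ, Real.exp (α' * V x) → α' = αb) :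
    Tendsto (fun n : ℕ =>
        (1 / (n : ℝ)) * Real.log ((volume (OrliczBall V R n)).toReal))
      atTop (nhds (phiV0 V αb - αb * R)) ∧
    IsGLB ((fun α : ℝ => phiV0 V α - α * R) '' Set.Iio (0 : ℝ)) (phiV0 V αb - αb * R) := by
  obtain ⟨hlim, hpos⟩ := hV.tendsto_log_volume hαb hR hαbeq
  refine ⟨hlim, IsLeast.isGLB ⟨⟨αb, hαb, rfl⟩, ?_⟩⟩
  rintro _ ⟨α, hα, rfl⟩
  refine le_of_tendsto hlim ?_
  filter_upwards [hpos, eventually_gt_atTop 0] with n hn hn0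
  exact hV.log_volume_le hα hn0 hn
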